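/- (Mixed-state designs from bipartite projective designs.) Let d ≥ 1, k ≥ 1, t ≥ 1, fix a unit vector ψ₀ ∈ ℂ^{Fin d × Fin k}, and let (ψ_m)_{m<M} (M ≥ 1) be a complex projective t-design of unit vectors in ℂ^{Fin d × Fin k} (with respect to the Haar probability measure on U(Fin d × Fin k)). Define the reduced density matrices ρ_m ∈ Matrix (Fin d) (Fin d) ℂ by ρ_m(i,j) = Σ_{l ∈ Fin k} ψ_m(i,l) · conj(ψ_m(j,l)), and similarly ρ_U(i,j) = Σ_l (Uψ₀)(i,l) · conj((Uψ₀)(j,l)) for U ∈ U(Fin d × Fin k). Then the reduced states form a t-design for the induced measure on mixed states: for all tuples p, q : Fin t → Fin d, (1/M) Σ_{m<M} ∏_{n<t} ρ_m(p n, q n) = ∫_{U(Fin d × Fin k)} ∏_{n<t} ρ_U(p n, q n) dHaar(U). -/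

import Mathlib

open MeasureTheory Matrix

noncomputable instance Matrix.measurableSpace {m n R : Type*} [MeasurableSpace R] :
    MeasurableSpace (Matrix m n R) := inferInstanceAs (MeasurableSpace (m → n → R))

instance Matrix.borelSpace {m n R : Type*} [Countable m] [Countable n]
    [TopologicalSpace R] [MeasurableSpace R] [BorelSpace R] [SecondCountableTopology R] :
    BorelSpace (Matrix m n R) := inferInstanceAs (BorelSpace (m → n → R))

instance {ι : Type*} [Fintype ι] [DecidableEq ι] :
    BorelSpace (Matrix.unitaryGroup ι ℂ) := Subtype.borelSpace _

/-!
Each product of entries of partial traces expands into a sum, over all choices of environment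
indices, of products of entries of the bipartite operators. Summing the design identity over these
choices gives the identity for the reduced operators. The sum commutes with the Haar integral
because a continuous function on the compact unitary group is integrable.
-/

section PartialTrace

variable {R m n κ τ : Type*} [Fintype κ]

/-- The partial trace of a bipartite operator over its second tensor factor `κ`. The system index
sets `m` of rows and `n` of columns may differ. -/
def partialTraceRight [AddCommMonoid R] (A : Matrix (m × κ) (n × κ) R) : Matrix m n R :=
  of fun i j => ∑ l, A (i, l) (j, l)

theorem partialTraceRight_apply [AddCommMonoid R] (A : Matrix (m × κ) (n × κ) R) (i : m) (j : n) :
    partialTraceRight A i j = ∑ l, A (i, l) (j, l) :=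
  rfl

theorem prod_partialTraceRight_apply [CommSemiring R] [Fintype τ] [DecidableEq τ]
    (A : Matrix (m × κ) (n × κ) R) (p : τ → m) (q : τ → n) :
    ∏ a, partialTraceRight A (p a) (q a) =
      ∑ l : τ → κ, ∏ a, A (p a, l a) (q a, l a) := by
  simp only [partialTraceRight_apply, Fintype.prod_sum]

end PartialTrace

theorem isCompact_unitaryGroup {ι 𝕜 : Type*} [Fintype ι] [DecidableEq ι] [RCLike 𝕜] :
    IsCompact (unitaryGroup ι 𝕜 : Set (Matrix ι ι 𝕜)) :=
  (isCompact_univ_pi fun _ => isCompact_univ_pi fun _ =>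
    isCompact_closedBall (0 : 𝕜) 1).of_isClosed_subset (isClosed_unitary (R := Matrix ι ι 𝕜))
    fun _ hU i _ j _ => mem_closedBall_zero_iff.2 (entry_norm_bound_of_unitary hU i j)

instance compactSpace_unitaryGroup {ι 𝕜 : Type*} [Fintype ι] [DecidableEq ι] [RCLike 𝕜] :
    CompactSpace (unitaryGroup ι 𝕜) :=
  isCompact_iff_compactSpace.1 isCompact_unitaryGroup

theorem integrable_prod_matrix_apply_of_continuous {X 𝕜 m n τ : Type*} [TopologicalSpace X]
    [CompactSpace X] [MeasurableSpace X] [OpensMeasurableSpace X] [RCLike 𝕜] [Fintype τ]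
    (μ : Measure X) [IsFiniteMeasureOnCompacts μ] {A : X → Matrix m n 𝕜} (hA : Continuous A)
    (p : τ → m) (q : τ → n) :
    Integrable (fun x => ∏ a, A x (p a) (q a)) μ :=
  (continuous_finsetProd _ fun a _ => hA.matrix_elem (p a) (q a)).integrable_of_hasCompactSupport
    (.of_compactSpace _)

theorem integral_prod_partialTraceRight {Ω 𝕜 m n κ τ : Type*} [MeasurableSpace Ω] [RCLike 𝕜]
    [Fintype κ] [Fintype τ] [DecidableEq τ] {μ : Measure Ω} {A : Ω → Matrix (m × κ) (n × κ) 𝕜}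
    (hA : ∀ (p : τ → m × κ) (q : τ → n × κ), Integrable (fun ω => ∏ a, A ω (p a) (q a)) μ)
    (p : τ → m) (q : τ → n) :
    ∫ ω, ∏ a, partialTraceRight (A ω) (p a) (q a) ∂μ =
      ∑ l : τ → κ, ∫ ω, ∏ a, A ω (p a, l a) (q a, l a) ∂μ := by
  simp only [prod_partialTraceRight_apply]
  exact integral_finsetSum _ fun l _ => hA (fun a => (p a, l a)) fun a => (q a, l a)

/-- Uniform weights `w` and rank-one projections `A ω`, `B s` give projective designs. -/
theorem mixed_state_design_of_bipartite_projective_design_general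
    {Ω 𝕜 m n κ τ σ : Type*} [MeasurableSpace Ω] [RCLike 𝕜] [Fintype κ] [Fintype τ] [Fintype σ]
    {μ : Measure Ω} {A : Ω → Matrix (m × κ) (n × κ) 𝕜}
    (hA : ∀ (p : τ → m × κ) (q : τ → n × κ), Integrable (fun ω => ∏ a, A ω (p a) (q a)) μ)
    (w : σ → 𝕜) (B : σ → Matrix (m × κ) (n × κ) 𝕜)
    (hdesign : ∀ (p : τ → m × κ) (q : τ → n × κ),
      ∑ s, w s * ∏ a, B s (p a) (q a) = ∫ ω, ∏ a, A ω (p a) (q a) ∂μ)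
    (p : τ → m) (q : τ → n) :
    ∑ s, w s * ∏ a, partialTraceRight (B s) (p a) (q a) =
      ∫ ω, ∏ a, partialTraceRight (A ω) (p a) (q a) ∂μ := by
  classical
  calc
    ∑ s, w s * ∏ a, partialTraceRight (B s) (p a) (q a)
    _ = ∑ l : τ → κ, ∑ s, w s * ∏ a, B s (p a, l a) (q a, l a) := by
      simp only [prod_partialTraceRight_apply, Finset.mul_sum]
      exact Finset.sum_comm
    _ = ∑ l : τ → κ, ∫ ω, ∏ a, A ω (p a, l a) (q a, l a) ∂μ :=
      Finset.sum_congr rfl fun l _ => hdesign (fun a => (p a, l a)) fun a => (q a, l a)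
    _ = ∫ ω, ∏ a, partialTraceRight (A ω) (p a) (q a) ∂μ :=
      (integral_prod_partialTraceRight hA p q).symm

/-- **mixed-state designs from bipartite projective designs.** Partial trace
of a complex projective `t`-design on `ℂ^{d·k}` yields a `t`-design for the induced measure
on mixed states of dimension `d`. -/
theorem mixed_state_design_of_bipartite_projective_design
    (d k t M : ℕ) (hd : 1 ≤ d) (hk : 1 ≤ k) (ht : 1 ≤ t) (hM : 1 ≤ M)
    (μ : Measure (Matrix.unitaryGroup (Fin d × Fin k) ℂ)) [μ.IsHaarMeasure]
    [IsProbabilityMeasure μ]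
    (ψ₀ : Fin d × Fin k → ℂ) (hψ₀ : ∑ i, ‖ψ₀ i‖ ^ 2 = 1)
    (ψ : Fin M → (Fin d × Fin k → ℂ)) (hψ : ∀ m, ∑ i, ‖ψ m i‖ ^ 2 = 1)
    (hdesign : ∀ p q : Fin t → (Fin d × Fin k),
      (1 / M : ℂ) * ∑ m, ∏ n, ψ m (p n) * (starRingEnd ℂ) (ψ m (q n)) =
        ∫ V : Matrix.unitaryGroup (Fin d × Fin k) ℂ,
          ∏ n, (V : Matrix (Fin d × Fin k) (Fin d × Fin k) ℂ).mulVec ψ₀ (p n) *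
            (starRingEnd ℂ)
              ((V : Matrix (Fin d × Fin k) (Fin d × Fin k) ℂ).mulVec ψ₀ (q n)) ∂μ) :
    ∀ p q : Fin t → Fin d,
      (1 / M : ℂ) * ∑ m, ∏ n,
          (∑ l : Fin k, ψ m (p n, l) * (starRingEnd ℂ) (ψ m (q n, l))) =
        ∫ V : Matrix.unitaryGroup (Fin d × Fin k) ℂ,
          ∏ n, (∑ l : Fin k,
            (V : Matrix (Fin d × Fin k) (Fin d × Fin k) ℂ).mulVec ψ₀ (p n, l) *
              (starRingEnd ℂ)
                ((V : Matrix (Fin d × Fin k) (Fin d × Fin k) ℂ).mulVec ψ₀ (q n, l))) ∂μ := by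
  have hcont : Continuous fun V : unitaryGroup (Fin d × Fin k) ℂ =>
      vecMulVec (V.1 *ᵥ ψ₀) (star (V.1 *ᵥ ψ₀)) := by
    fun_prop
  simp only [Finset.mul_sum _ _ (1 / M : ℂ)] at hdesign ⊢
  exact mixed_state_design_of_bipartite_projective_design_general
    (integrable_prod_matrix_apply_of_continuous μ hcont) (fun _ => 1 / M)
    (fun m => vecMulVec (ψ m) (star (ψ m))) hdesign
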